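/- arXiv:1903.07192 — 2 statements merged into one kernel-verified Lean document; each statement's English description precedes it below -/
import Mathlib

section
/- Fix ρ ∈ (0,1) and ν ∈ ℝ. Then ξ(h*) = 0 and ξ(−h*) = 0; ξ(x) > 0 for every x with |x| < h*; and η₊(x) ≥ 0 and η₋(x) ≥ 0 for every x with |x| ≤ h*. -/
open Real

noncomputable section

/-- `ρ₀ = √(1-ρ²)`. -/
def rz (ρ : ℝ) : ℝ := Real.sqrt (1 - ρ ^ 2)

/-- `ξ(x) = (ρ²−x²)(ρ₀²−x²) − ρ²ρ₀²(cos²ν)x²`. -/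
def xif (ρ ν x : ℝ) : ℝ :=
  (ρ ^ 2 - x ^ 2) * ((rz ρ) ^ 2 - x ^ 2) - ρ ^ 2 * (rz ρ) ^ 2 * (Real.cos ν) ^ 2 * x ^ 2

/-- `η₊(x)`. -/
def etaP (ρ ν x : ℝ) : ℝ :=
  1 - ρ ^ 2 * (rz ρ) ^ 2 * (1 + (Real.sin ν) ^ 2)
    - (1 - ρ ^ 2 * (rz ρ) ^ 2 * (Real.cos ν) ^ 2) * x ^ 2
    + 2 * ρ * rz ρ * Real.sin ν * Real.sqrt (xif ρ ν x)

/-- `η₋(x)`. -/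
def etaM (ρ ν x : ℝ) : ℝ :=
  1 - ρ ^ 2 * (rz ρ) ^ 2 * (1 + (Real.sin ν) ^ 2)
    - (1 - ρ ^ 2 * (rz ρ) ^ 2 * (Real.cos ν) ^ 2) * x ^ 2
    - 2 * ρ * rz ρ * Real.sin ν * Real.sqrt (xif ρ ν x)

/-- `h*`. -/
def hstar (ρ ν : ℝ) : ℝ :=
  (1 / 2) * (Real.sqrt ((1 + ρ * rz ρ) ^ 2 - ρ ^ 2 * (rz ρ) ^ 2 * (Real.sin ν) ^ 2)
    - Real.sqrt ((1 - ρ * rz ρ) ^ 2 - ρ ^ 2 * (rz ρ) ^ 2 * (Real.sin ν) ^ 2))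

/-!
For `|ρ| ≤ 1` the polynomial `ξ` is biquadratic with constant term `(ρρ₀)²` and middle coefficient
`-(1 + ρ²ρ₀² cos² ν)`. The half-difference `h*` and the half-sum `k*` of the two square roots
satisfy `h* k* = ρρ₀` and `h*² + k*² = 1 + ρ²ρ₀² cos² ν`, so `ξ(x) = (h*² - x²)(k*² - x²)` with
`h*² ≤ k*²`, which settles the zeros and the sign of `ξ`.

The numbers `η₊` and `η₋` are conjugate over `√ξ`, and their product is
`(1 - x²)² (1 - ρ²ρ₀² (1 + sin ν)²) (1 - ρ²ρ₀² (1 - sin ν)²)`, which is nonnegative because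
`|ρρ₀| ≤ 1/2`. Their sum is nonnegative once `x² ≤ 1/2`, and `h*⁴ ≤ h*² k*² = (ρρ₀)² ≤ 1/4`.
Two numbers with nonnegative sum and product are both nonnegative.
-/

/-- The conjugate `k*` of `h*`, the half-sum of the two square roots whose half-difference is `h*`:
for `|ρ| ≤ 1` the roots of `ξ` are `±h*` and `±k*`. -/
def kstar (ρ ν : ℝ) : ℝ :=
  (1 / 2) * (√((1 + ρ * rz ρ) ^ 2 - ρ ^ 2 * rz ρ ^ 2 * sin ν ^ 2)
    + √((1 - ρ * rz ρ) ^ 2 - ρ ^ 2 * rz ρ ^ 2 * sin ν ^ 2))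

theorem nonneg_and_nonneg_of_add_nonneg_of_mul_nonneg {R : Type*} [Ring R] [LinearOrder R]
    [IsStrictOrderedRing R] {a b : R} (hadd : 0 ≤ a + b) (hmul : 0 ≤ a * b) :
    0 ≤ a ∧ 0 ≤ b := by
  rcases mul_nonneg_iff.mp hmul with hab | ⟨ha, hb⟩
  · exact hab
  · exact ⟨nonneg_of_le_add_left (hb.trans hadd), nonneg_of_le_add_right (ha.trans hadd)⟩

theorem sq_mul_sin_sq_le_sq_one_sub {p : ℝ} (hp : p ≤ 1 / 2) (ν : ℝ) :
    p ^ 2 * sin ν ^ 2 ≤ (1 - p) ^ 2 :=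
  calc p ^ 2 * sin ν ^ 2 ≤ p ^ 2 := mul_le_of_le_one_right (sq_nonneg p) (sin_sq_le_one ν)
    _ ≤ (1 - p) ^ 2 := by linarith

theorem sq_mul_sq_one_add_le_one {p s : ℝ} (hp : |p| ≤ 1 / 2) (hs : |s| ≤ 1) :
    p ^ 2 * (1 + s) ^ 2 ≤ 1 := by
  have hs' : |1 + s| ≤ 2 := by linarith [abs_add_le 1 s, abs_one (α := ℝ)]
  rw [← mul_pow, sq_le_one_iff_abs_le_one, abs_mul]
  calc |p| * |1 + s| ≤ 1 / 2 * 2 := by gcongr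
    _ = 1 := by norm_num

section

variable {ρ : ℝ}

theorem sq_rz (hρ : |ρ| ≤ 1) : rz ρ ^ 2 = 1 - ρ ^ 2 :=
  sq_sqrt (sub_nonneg.mpr ((sq_le_one_iff_abs_le_one ρ).mpr hρ))

theorem abs_mul_rz_le_half (hρ : |ρ| ≤ 1) : |ρ * rz ρ| ≤ 1 / 2 := by
  have hcircle := sq_rz hρ
  rw [abs_le]
  constructor <;> nlinarith [sq_nonneg (ρ + rz ρ), sq_nonneg (ρ - rz ρ)]

theorem sq_mul_sq_rz_le_quarter (hρ : |ρ| ≤ 1) : ρ ^ 2 * rz ρ ^ 2 ≤ 1 / 4 :=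
  calc ρ ^ 2 * rz ρ ^ 2 = |ρ * rz ρ| ^ 2 := by rw [sq_abs, mul_pow]
    _ ≤ (1 / 2) ^ 2 := by gcongr; exact abs_mul_rz_le_half hρ
    _ = 1 / 4 := by norm_num

theorem xif_eq (hρ : |ρ| ≤ 1) (ν x : ℝ) :
    xif ρ ν x = x ^ 4 - (1 + ρ ^ 2 * rz ρ ^ 2 * cos ν ^ 2) * x ^ 2 + ρ ^ 2 * rz ρ ^ 2 := by
  unfold xif
  linear_combination -x ^ 2 * sq_rz hρ

theorem sq_sqrt_add_radicand (hρ : |ρ| ≤ 1) (ν : ℝ) :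
    √((1 + ρ * rz ρ) ^ 2 - ρ ^ 2 * rz ρ ^ 2 * sin ν ^ 2) ^ 2 =
      (1 + ρ * rz ρ) ^ 2 - ρ ^ 2 * rz ρ ^ 2 * sin ν ^ 2 := by
  have hp : -(ρ * rz ρ) ≤ 1 / 2 := neg_le.mp (abs_le.mp (abs_mul_rz_le_half hρ)).1
  exact sq_sqrt (by linarith [sq_mul_sin_sq_le_sq_one_sub hp ν])

theorem sq_sqrt_sub_radicand (hρ : |ρ| ≤ 1) (ν : ℝ) :
    √((1 - ρ * rz ρ) ^ 2 - ρ ^ 2 * rz ρ ^ 2 * sin ν ^ 2) ^ 2 =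
      (1 - ρ * rz ρ) ^ 2 - ρ ^ 2 * rz ρ ^ 2 * sin ν ^ 2 := by
  have hp : ρ * rz ρ ≤ 1 / 2 := (abs_le.mp (abs_mul_rz_le_half hρ)).2
  exact sq_sqrt (by linarith [sq_mul_sin_sq_le_sq_one_sub hp ν])

theorem hstar_mul_kstar (hρ : |ρ| ≤ 1) (ν : ℝ) : hstar ρ ν * kstar ρ ν = ρ * rz ρ := by
  unfold hstar kstar
  linear_combination (1 / 4) * sq_sqrt_add_radicand hρ ν - (1 / 4) * sq_sqrt_sub_radicand hρ ν

theorem hstar_sq_add_kstar_sq (hρ : |ρ| ≤ 1) (ν : ℝ) :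
    hstar ρ ν ^ 2 + kstar ρ ν ^ 2 = 1 + ρ ^ 2 * rz ρ ^ 2 * cos ν ^ 2 := by
  unfold hstar kstar
  linear_combination (1 / 2) * sq_sqrt_add_radicand hρ ν + (1 / 2) * sq_sqrt_sub_radicand hρ ν
    - ρ ^ 2 * rz ρ ^ 2 * sin_sq_add_cos_sq ν

theorem xif_eq_mul (hρ : |ρ| ≤ 1) (ν x : ℝ) :
    xif ρ ν x = (hstar ρ ν ^ 2 - x ^ 2) * (kstar ρ ν ^ 2 - x ^ 2) := by
  rw [xif_eq hρ, ← hstar_sq_add_kstar_sq hρ, ← mul_pow, ← hstar_mul_kstar hρ ν]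
  ring

theorem hstar_sq_le_kstar_sq (ρ ν : ℝ) : hstar ρ ν ^ 2 ≤ kstar ρ ν ^ 2 := by
  unfold hstar kstar
  set A := √((1 + ρ * rz ρ) ^ 2 - ρ ^ 2 * rz ρ ^ 2 * sin ν ^ 2)
  set B := √((1 - ρ * rz ρ) ^ 2 - ρ ^ 2 * rz ρ ^ 2 * sin ν ^ 2)
  have hAB : 0 ≤ A * B := mul_nonneg (sqrt_nonneg _) (sqrt_nonneg _)
  linarith

theorem hstar_sq_le_half (hρ : |ρ| ≤ 1) (ν : ℝ) : hstar ρ ν ^ 2 ≤ 1 / 2 := by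
  refine le_of_sq_le_sq ?_ (by norm_num)
  calc (hstar ρ ν ^ 2) ^ 2 ≤ hstar ρ ν ^ 2 * kstar ρ ν ^ 2 := by
        rw [sq (hstar ρ ν ^ 2)]
        exact mul_le_mul_of_nonneg_left (hstar_sq_le_kstar_sq ρ ν) (sq_nonneg _)
    _ = ρ ^ 2 * rz ρ ^ 2 := by rw [← mul_pow, hstar_mul_kstar hρ, mul_pow]
    _ ≤ (1 / 2) ^ 2 := by linarith [sq_mul_sq_rz_le_quarter hρ]

variable {ν x : ℝ}

theorem xif_pos (hρ : |ρ| ≤ 1) (hx : |x| < |hstar ρ ν|) : 0 < xif ρ ν x := by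
  have hxh : x ^ 2 < hstar ρ ν ^ 2 := sq_lt_sq.mpr hx
  rw [xif_eq_mul hρ]
  exact mul_pos (sub_pos.mpr hxh) (sub_pos.mpr (hxh.trans_le (hstar_sq_le_kstar_sq ρ ν)))

theorem xif_nonneg (hρ : |ρ| ≤ 1) (hx : |x| ≤ |hstar ρ ν|) : 0 ≤ xif ρ ν x := by
  have hxh : x ^ 2 ≤ hstar ρ ν ^ 2 := sq_le_sq.mpr hx
  rw [xif_eq_mul hρ]
  exact mul_nonneg (sub_nonneg.mpr hxh) (sub_nonneg.mpr (hxh.trans (hstar_sq_le_kstar_sq ρ ν)))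

theorem etaP_add_etaM_nonneg (hρ : |ρ| ≤ 1) (ν : ℝ) (hx : x ^ 2 ≤ 1 / 2) :
    0 ≤ etaP ρ ν x + etaM ρ ν x := by
  have hconst : ρ ^ 2 * rz ρ ^ 2 * (1 + sin ν ^ 2) ≤ 1 / 4 * (1 + 1) := by
    gcongr
    exacts [sq_mul_sq_rz_le_quarter hρ, sin_sq_le_one ν]
  have hcoeff : 0 ≤ ρ ^ 2 * rz ρ ^ 2 * cos ν ^ 2 * x ^ 2 := by positivity
  unfold etaP etaM
  linarith

theorem etaP_mul_etaM (hρ : |ρ| ≤ 1) (hξ : 0 ≤ xif ρ ν x) :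
    etaP ρ ν x * etaM ρ ν x = (1 - x ^ 2) ^ 2 *
      ((1 - (ρ * rz ρ) ^ 2 * (1 + sin ν) ^ 2) * (1 - (ρ * rz ρ) ^ 2 * (1 - sin ν) ^ 2)) := by
  have hsq : √(xif ρ ν x) ^ 2 =
      x ^ 4 - (1 + ρ ^ 2 * rz ρ ^ 2 * cos ν ^ 2) * x ^ 2 + ρ ^ 2 * rz ρ ^ 2 := by
    rw [sq_sqrt hξ, xif_eq hρ]
  rw [cos_sq'] at hsq
  unfold etaP etaM
  rw [cos_sq']
  linear_combination -4 * ρ ^ 2 * rz ρ ^ 2 * sin ν ^ 2 * hsq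

theorem etaP_mul_etaM_nonneg (hρ : |ρ| ≤ 1) (hξ : 0 ≤ xif ρ ν x) :
    0 ≤ etaP ρ ν x * etaM ρ ν x := by
  have hp := abs_mul_rz_le_half hρ
  have hplus := sq_mul_sq_one_add_le_one hp (abs_sin_le_one ν)
  have hminus := sq_mul_sq_one_add_le_one hp ((abs_neg (sin ν)).trans_le (abs_sin_le_one ν))
  rw [etaP_mul_etaM hρ hξ]
  exact mul_nonneg (sq_nonneg _) (mul_nonneg (sub_nonneg.mpr hplus) (sub_nonneg.mpr hminus))

theorem etaP_nonneg_and_etaM_nonneg (hρ : |ρ| ≤ 1) (hx : |x| ≤ |hstar ρ ν|) :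
    0 ≤ etaP ρ ν x ∧ 0 ≤ etaM ρ ν x :=
  have hx_half : x ^ 2 ≤ 1 / 2 := (sq_le_sq.mpr hx).trans (hstar_sq_le_half hρ ν)
  nonneg_and_nonneg_of_add_nonneg_of_mul_nonneg (etaP_add_etaM_nonneg hρ ν hx_half)
    (etaP_mul_etaM_nonneg hρ (xif_nonneg hρ hx))

end

theorem stmt11_general {ρ : ℝ} (hρ : |ρ| ≤ 1) (ν : ℝ) :
    xif ρ ν (hstar ρ ν) = 0 ∧ xif ρ ν (-(hstar ρ ν)) = 0 ∧
    (∀ x : ℝ, |x| < |hstar ρ ν| → 0 < xif ρ ν x) ∧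
    (∀ x : ℝ, |x| ≤ |hstar ρ ν| → 0 ≤ etaP ρ ν x ∧ 0 ≤ etaM ρ ν x) := by
  refine ⟨?_, ?_, fun _ => xif_pos hρ, fun _ => etaP_nonneg_and_etaM_nonneg hρ⟩
  · rw [xif_eq_mul hρ, sub_self, zero_mul]
  · rw [xif_eq_mul hρ, neg_sq, sub_self, zero_mul]

/-- `ξ(±h*) = 0`, `ξ > 0` on `|x| < h*`, and `η_± ≥ 0` on `|x| ≤ h*`. -/
theorem stmt11 (ρ ν : ℝ) (hρ : ρ ∈ Set.Ioo (0 : ℝ) 1) :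
    xif ρ ν (hstar ρ ν) = 0 ∧ xif ρ ν (-(hstar ρ ν)) = 0 ∧
    (∀ x : ℝ, |x| < hstar ρ ν → 0 < xif ρ ν x) ∧
    (∀ x : ℝ, |x| ≤ hstar ρ ν → 0 ≤ etaP ρ ν x ∧ 0 ≤ etaM ρ ν x) := by
  have hρ' : |ρ| ≤ 1 := abs_le.mpr ⟨by linarith [hρ.1], hρ.2.le⟩
  obtain ⟨hroot, hroot_neg, hξ, hη⟩ := stmt11_general hρ' ν
  exact ⟨hroot, hroot_neg, fun x hx => hξ x (hx.trans_le (le_abs_self _)),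
    fun x hx => hη x (hx.trans (le_abs_self _))⟩

end
end

section
/- Fix ρ ∈ (0,1) and ν ∈ ℝ, and assume (ρ, ν) ≠ (1/√2, π/2 + nπ) for every integer n. Define h(k) = ρρ₀ cos k / √(1 − ρ²ρ₀²(sin k − sin ν)²). Then for every natural number r and every real number c, ∫_{−π}^{π} h(k)^r (1 + c·h(k)) dk/(2π) = ∫_{−h*}^{h*} x^r (1 + c·x) (√(η₊(x)) + √(η₋(x))) / (2π(1−x²)√(ξ(x))) dx. -/
open Real

noncomputable section

/-- `h(k) = ρρ₀ cos k / √(1 − ρ²ρ₀²(sin k − sin ν)²)`. -/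
def hfun (ρ ν k : ℝ) : ℝ :=
  ρ * rz ρ * Real.cos k / Real.sqrt (1 - ρ ^ 2 * (rz ρ) ^ 2 * (Real.sin k - Real.sin ν) ^ 2)

/-
With `a = ρρ₀` and `s = sin ν`, the function `h` is the derivative of
`ω(k) = arcsin (a (sin k - s))`, and the excluded parameters are exactly those for which `cos ω`
has a zero. Over one period `h` has two critical points, `k₀` and `π - k₀`: it decreases from `h*`
to `-h*` between them and increases back afterwards. On the decreasing branch
`ξ(h) = (h' cos ω)²` and `η₊(h) = cos² ω (1 - h²)²`, so the Jacobian `1 / |h'|` equals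
`√η₊ / ((1 - h²) √ξ)`. The shift `k ↦ k + π` turns the other branch into the decreasing branch for
`-s`, which accounts for `η₋`.
-/

open Set MeasureTheory intervalIntegral

section ChangeOfVariables

variable {E : Type*} [NormedAddCommGroup E] [NormedSpace ℝ E]
  {g : ℝ → E} {f f' w : ℝ → ℝ} {p q : ℝ}

lemma eqOn_neg_comp_deriv_smul {t : Set ℝ} (hw : ∀ k ∈ t, f' k * w (f k) = -1) :
    EqOn (fun k => -g (f k)) (fun k => f' k • ((fun x => w x • g x) ∘ f) k) t := fun k hk => by
  simp only [Function.comp_apply, smul_smul, hw k hk, neg_one_smul]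

theorem intervalIntegrable_smul_iff_comp_of_deriv_nonpos (hf : ContinuousOn f (uIcc p q))
    (hderiv : ∀ k ∈ uIoo p q, HasDerivAt f (f' k) k) (hneg : ∀ k ∈ uIoo p q, f' k ≤ 0)
    (hw : ∀ k ∈ uIoo p q, f' k * w (f k) = -1) :
    IntervalIntegrable (fun x => w x • g x) volume (f q) (f p) ↔
      IntervalIntegrable (fun k => g (f k)) volume p q := by
  rw [IntervalIntegrable.symm_iff, ← integrable_deriv_smul_comp_iff_of_deriv_nonpos hf hderiv hneg,
    ← intervalIntegrable_congr_uIoo (eqOn_neg_comp_deriv_smul hw)]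
  exact ⟨fun h => by simpa only [Pi.neg_def, neg_neg] using h.neg, IntervalIntegrable.neg⟩

theorem integral_comp_eq_integral_smul_of_deriv_nonpos (hf : ContinuousOn f (uIcc p q))
    (hderiv : ∀ k ∈ uIoo p q, HasDerivAt f (f' k) k) (hneg : ∀ k ∈ uIoo p q, f' k ≤ 0)
    (hw : ∀ k ∈ uIoo p q, f' k * w (f k) = -1) :
    ∫ k in p..q, g (f k) = ∫ x in (f q)..(f p), w x • g x := by
  rw [integral_symm (f p), ← integral_deriv_smul_comp_of_deriv_nonpos hf hderiv hneg,
    ← integral_congr_uIoo (eqOn_neg_comp_deriv_smul hw), intervalIntegral.integral_neg, neg_neg]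

end ChangeOfVariables

/-- The squared cosine `cos² ω` of the frequency `ω(k)` determined by the dispersion relation
`sin ω = a (sin k - s)`. -/
def cosSqFreq (a s k : ℝ) : ℝ := 1 - a ^ 2 * (sin k - s) ^ 2

/-- The group velocity `dω/dk` of the dispersion relation `sin ω = a (sin k - s)`. It is `h` for
`a = ρρ₀` and `s = sin ν`. -/
def groupVelocity (a s k : ℝ) : ℝ := a * cos k / √(cosSqFreq a s k)

/-- The quadratic polynomial in `u = sin k` whose zeros are the critical points of the group
velocity. -/
def critPoly (a s u : ℝ) : ℝ := a ^ 2 * s * u ^ 2 + (1 - a ^ 2 * (1 + s ^ 2)) * u + a ^ 2 * s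

/-- The derivative `ω''` of the group velocity, in factored form. -/
def groupVelocityDeriv (a s k : ℝ) : ℝ :=
  -(a * critPoly a s (sin k) / (cosSqFreq a s k * √(cosSqFreq a s k)))

/-- The polynomial `ξ` in terms of `a = ρρ₀` and `s = sin ν`. -/
def velXi (a s x : ℝ) : ℝ := a ^ 2 - (1 + a ^ 2 - a ^ 2 * s ^ 2) * x ^ 2 + x ^ 4

/-- The function `η₊` in terms of `a = ρρ₀` and `s = sin ν`; replacing `s` by `-s` gives `η₋`. -/
def velEta (a s x : ℝ) : ℝ :=
  1 - a ^ 2 * (1 + s ^ 2) - (1 - a ^ 2 * (1 - s ^ 2)) * x ^ 2 + 2 * a * s * √(velXi a s x)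

/-- The maximal group velocity `h*` in terms of `a = ρρ₀` and `s = sin ν`. -/
def maxVelocity (a s : ℝ) : ℝ :=
  1 / 2 * (√((1 + a) ^ 2 - a ^ 2 * s ^ 2) - √((1 - a) ^ 2 - a ^ 2 * s ^ 2))

/-- The density at velocity `x` of the image of Lebesgue measure under the decreasing branch of
the group velocity. -/
def branchDensity (a s x : ℝ) : ℝ := √(velEta a s x) / ((1 - x ^ 2) * √(velXi a s x))

variable {a s k k₀ : ℝ}

section Symmetry

lemma groupVelocity_pi_sub : groupVelocity a s (π - k) = -groupVelocity a s k := by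
  simp only [groupVelocity, cosSqFreq, sin_pi_sub, cos_pi_sub, mul_neg, neg_div]

lemma groupVelocity_add_pi : groupVelocity a s (k + π) = -groupVelocity a (-s) k := by
  have h : cosSqFreq a s (k + π) = cosSqFreq a (-s) k := by
    simp only [cosSqFreq, sin_add_pi]
    ring
  simp only [groupVelocity, h, cos_add_pi, mul_neg, neg_div]

lemma periodic_groupVelocity : Function.Periodic (groupVelocity a s) (2 * π) := fun k => by
  simp only [groupVelocity, cosSqFreq, sin_add_two_pi, cos_add_two_pi]

lemma critPoly_neg_neg (u : ℝ) : critPoly a (-s) (-u) = -critPoly a s u := by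
  unfold critPoly
  ring

lemma velXi_neg (x : ℝ) : velXi a (-s) x = velXi a s x := by
  simp only [velXi, neg_sq]

lemma maxVelocity_neg : maxVelocity a (-s) = maxVelocity a s := by
  simp only [maxVelocity, neg_sq]

lemma branchDensity_neg_right (x : ℝ) : branchDensity a s (-x) = branchDensity a s x := by
  simp only [branchDensity, velEta, velXi, neg_sq, Even.neg_pow (by decide : Even 4)]

end Symmetry

section Pointwise

lemma groupVelocity_sq (hD : 0 < cosSqFreq a s k) :
    groupVelocity a s k ^ 2 = a ^ 2 * (1 - sin k ^ 2) / cosSqFreq a s k := by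
  rw [groupVelocity, div_pow, sq_sqrt hD.le, mul_pow, cos_sq']

lemma velXi_groupVelocity (hD : 0 < cosSqFreq a s k) :
    velXi a s (groupVelocity a s k) = (a * critPoly a s (sin k) / cosSqFreq a s k) ^ 2 := by
  have h4 : groupVelocity a s k ^ 4 = (a ^ 2 * (1 - sin k ^ 2) / cosSqFreq a s k) ^ 2 := by
    rw [← groupVelocity_sq hD]
    ring
  rw [velXi, h4, groupVelocity_sq hD]
  field_simp
  unfold critPoly cosSqFreq
  ring

lemma sqrt_velXi_groupVelocity (ha : 0 ≤ a) (hD : 0 < cosSqFreq a s k)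
    (hcrit : 0 ≤ critPoly a s (sin k)) :
    √(velXi a s (groupVelocity a s k)) = a * critPoly a s (sin k) / cosSqFreq a s k := by
  rw [velXi_groupVelocity hD, sqrt_sq (by positivity)]

lemma velEta_groupVelocity (ha : 0 ≤ a) (hD : 0 < cosSqFreq a s k)
    (hcrit : 0 ≤ critPoly a s (sin k)) :
    velEta a s (groupVelocity a s k) = cosSqFreq a s k * (1 - groupVelocity a s k ^ 2) ^ 2 := by
  rw [velEta, sqrt_velXi_groupVelocity ha hD hcrit, groupVelocity_sq hD]
  field_simp
  unfold critPoly cosSqFreq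
  ring

lemma groupVelocityDeriv_nonpos (ha : 0 ≤ a) (hD : 0 < cosSqFreq a s k)
    (hcrit : 0 ≤ critPoly a s (sin k)) : groupVelocityDeriv a s k ≤ 0 :=
  neg_nonpos.2 (by positivity)

lemma groupVelocityDeriv_mul_branchDensity (ha : 0 < a) (hD : 0 < cosSqFreq a s k)
    (hcrit : 0 < critPoly a s (sin k)) (hv : groupVelocity a s k ^ 2 < 1) :
    groupVelocityDeriv a s k * branchDensity a s (groupVelocity a s k) = -1 := by
  have hv' : 0 < 1 - groupVelocity a s k ^ 2 := sub_pos.2 hv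
  rw [groupVelocityDeriv, branchDensity, velEta_groupVelocity ha.le hD hcrit.le,
    sqrt_velXi_groupVelocity ha.le hD hcrit.le, sqrt_mul hD.le, sqrt_sq hv'.le]
  field_simp

lemma hasDerivAt_groupVelocity (hD : 0 < cosSqFreq a s k) :
    HasDerivAt (groupVelocity a s) (groupVelocityDeriv a s k) k := by
  have hD' : HasDerivAt (cosSqFreq a s) (-(a ^ 2 * (2 * (sin k - s) * cos k))) k := by
    refine ((((hasDerivAt_sin k).sub_const s).pow 2).const_mul (a ^ 2)).const_sub 1
      |>.congr_deriv ?_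
    simp
  have hne : √(cosSqFreq a s k) ≠ 0 := (sqrt_pos.2 hD).ne'
  refine ((hasDerivAt_cos k).const_mul a).div (hD'.sqrt hD.ne') hne |>.congr_deriv ?_
  have hcrit : critPoly a s (sin k) =
      sin k * cosSqFreq a s k - a ^ 2 * (sin k - s) * cos k ^ 2 := by
    rw [cos_sq', critPoly, cosSqFreq]
    ring
  rw [groupVelocityDeriv, hcrit]
  field_simp
  rw [sq_sqrt hD.le]
  ring

end Pointwise

lemma sin_lt_sin_of_mem_Ioo_pi_sub (hk₀ : -(π / 2) ≤ k₀) (hk : k ∈ Ioo k₀ (π - k₀)) :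
    sin k₀ < sin k := by
  rcases le_total k (π / 2) with h | h
  · exact sin_lt_sin_of_lt_of_le_pi_div_two hk₀ h hk.1
  · rw [← sin_pi_sub k]
    exact sin_lt_sin_of_lt_of_le_pi_div_two hk₀ (by linarith) (by linarith [hk.2])

section Nondegenerate

lemma cosSqFreq_pos (ha : 0 ≤ a) (has : a * (1 + |s|) < 1) (k : ℝ) : 0 < cosSqFreq a s k := by
  have h : |a * (sin k - s)| < 1 :=
    calc |a * (sin k - s)| = a * |sin k - s| := by rw [abs_mul, abs_of_nonneg ha]
      _ ≤ a * (1 + |s|) := by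
        gcongr
        exact (abs_sub _ _).trans (by gcongr; exact abs_sin_le_one k)
      _ < 1 := has
  rw [cosSqFreq, ← mul_pow]
  exact sub_pos.2 ((sq_lt_one_iff_abs_lt_one _).2 h)

lemma continuous_groupVelocity (ha : 0 ≤ a) (has : a * (1 + |s|) < 1) :
    Continuous (groupVelocity a s) :=
  continuous_iff_continuousAt.2 fun k =>
    (hasDerivAt_groupVelocity (cosSqFreq_pos ha has k)).continuousAt

lemma groupVelocity_sq_le (ha : 0 ≤ a) (has : a * (1 + |s|) < 1) (k : ℝ) :
    groupVelocity a s k ^ 2 ≤ a := by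
  set t := |sin k| with ht
  have ha1 : a ≤ 1 := by nlinarith [abs_nonneg s]
  have hω : |a * (sin k - s)| ≤ 1 - a * (1 - t) :=
    calc |a * (sin k - s)| = a * |sin k - s| := by rw [abs_mul, abs_of_nonneg ha]
      _ ≤ a * (t + |s|) := by gcongr; exact abs_sub _ _
      _ ≤ 1 - a * (1 - t) := by linarith
  have hω2 : a ^ 2 * (sin k - s) ^ 2 ≤ (1 - a * (1 - t)) ^ 2 := by
    rw [← mul_pow]
    exact sq_le_sq' (abs_le.1 hω).1 (abs_le.1 hω).2
  rw [groupVelocity_sq (cosSqFreq_pos ha has k), div_le_iff₀ (cosSqFreq_pos ha has k)]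
  calc a ^ 2 * (1 - sin k ^ 2) = a * (a * (1 - t ^ 2)) := by rw [ht, sq_abs]; ring
    _ = a * (1 - (1 - a * (1 - t)) ^ 2 - a * (1 - a) * (1 - t) ^ 2) := by ring
    _ ≤ a * cosSqFreq a s k := by
      have : 0 ≤ a * (1 - a) * (1 - t) ^ 2 := by have := sub_nonneg.2 ha1; positivity
      rw [cosSqFreq]
      exact mul_le_mul_of_nonneg_left (by linarith) ha

lemma groupVelocity_sq_lt_one (ha : 0 ≤ a) (has : a * (1 + |s|) < 1) (k : ℝ) :
    groupVelocity a s k ^ 2 < 1 :=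
  (groupVelocity_sq_le ha has k).trans_lt (by nlinarith [abs_nonneg s])

lemma exists_critPoly_sin_eq_zero (ha : 0 ≤ a) (has : a * (1 + |s|) < 1) :
    ∃ k₀ ∈ Ioo (-(π / 2)) (π / 2), critPoly a s (sin k₀) = 0 := by
  have hlo : critPoly a s (sin (-(π / 2))) < 0 := by
    have h := cosSqFreq_pos ha has (-(π / 2))
    simp only [cosSqFreq, critPoly, sin_neg, sin_pi_div_two] at h ⊢
    linarith
  have hhi : 0 < critPoly a s (sin (π / 2)) := by
    have h := cosSqFreq_pos ha has (π / 2)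
    simp only [cosSqFreq, critPoly, sin_pi_div_two] at h ⊢
    linarith
  have hc : Continuous fun k => critPoly a s (sin k) := by
    unfold critPoly
    fun_prop
  exact intermediate_value_Ioo (by linarith [pi_pos]) hc.continuousOn ⟨hlo, hhi⟩

lemma critPoly_pos_of_lt (ha : 0 ≤ a) (has : a * (1 + |s|) < 1) {u v : ℝ}
    (hroot : critPoly a s u = 0) (hu : -1 ≤ u) (huv : u < v) (hv : v ≤ 1) :
    0 < critPoly a s v := by
  have hB : 0 < 1 - a ^ 2 * (1 + s ^ 2) := by
    have h₁ := cosSqFreq_pos ha has (π / 2)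
    have h₂ := cosSqFreq_pos ha has (-(π / 2))
    simp only [cosSqFreq, sin_neg, sin_pi_div_two] at h₁ h₂
    linarith
  have huv1 : u * v < 1 := by nlinarith
  have hfactor : (1 + u ^ 2) * critPoly a s v =
      (1 - a ^ 2 * (1 + s ^ 2)) * ((v - u) * (1 - u * v)) := by
    unfold critPoly at hroot ⊢
    linear_combination (1 + v ^ 2) * hroot
  have : 0 < (1 + u ^ 2) * critPoly a s v := by
    rw [hfactor]
    exact mul_pos hB (mul_pos (sub_pos.2 huv) (sub_pos.2 huv1))
  exact pos_of_mul_pos_right this (by positivity)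

lemma eq_maxVelocity_of_velXi_eq_zero (ha : 0 < a) (has : a * (1 + |s|) < 1) {x : ℝ}
    (hx : 0 ≤ x) (hxa : x ^ 2 ≤ a) (h0 : velXi a s x = 0) : x = maxVelocity a s := by
  have hA : 0 < (1 - a) ^ 2 - a ^ 2 * s ^ 2 := by
    rw [← mul_pow, ← sq_abs (a * s), abs_mul, abs_of_pos ha]
    exact sub_pos.2 (pow_lt_pow_left₀ (by linarith) (by positivity) two_ne_zero)
  have hB : 0 ≤ (1 + a) ^ 2 - a ^ 2 * s ^ 2 := by linarith
  unfold maxVelocity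
  set p := √((1 - a) ^ 2 - a ^ 2 * s ^ 2)
  set q := √((1 + a) ^ 2 - a ^ 2 * s ^ 2)
  have hp2 : p ^ 2 = (1 - a) ^ 2 - a ^ 2 * s ^ 2 := sq_sqrt hA.le
  have hq2 : q ^ 2 = (1 + a) ^ 2 - a ^ 2 * s ^ 2 := sq_sqrt hB
  have hp : 0 < p := sqrt_pos.2 hA
  have hpq : p < q := sqrt_lt_sqrt hA.le (by linarith)
  have hfactor : velXi a s x = (x ^ 2 - ((q - p) / 2) ^ 2) * (x ^ 2 - ((q + p) / 2) ^ 2) := by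
    unfold velXi
    linear_combination (-(q ^ 2 - p ^ 2) / 16 - a / 4 + x ^ 2 / 2) * hq2 +
      ((q ^ 2 - p ^ 2) / 16 + a / 4 + x ^ 2 / 2) * hp2
  rw [hfactor] at h0
  rcases mul_eq_zero.1 h0 with h | h
  · have : x = (q - p) / 2 :=
      (pow_left_inj₀ hx (by linarith) two_ne_zero).1 (sub_eq_zero.1 h)
    linarith
  · have : a < ((q + p) / 2) ^ 2 := by nlinarith
    linarith

lemma groupVelocity_eq_maxVelocity (ha : 0 < a) (has : a * (1 + |s|) < 1)
    (hk₀ : k₀ ∈ Icc (-(π / 2)) (π / 2)) (hroot : critPoly a s (sin k₀) = 0) :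
    groupVelocity a s k₀ = maxVelocity a s := by
  have hcos : 0 ≤ cos k₀ := cos_nonneg_of_mem_Icc hk₀
  refine eq_maxVelocity_of_velXi_eq_zero ha has ?_ (groupVelocity_sq_le ha.le has k₀) ?_
  · unfold groupVelocity
    positivity
  · simp [velXi_groupVelocity (cosSqFreq_pos ha.le has k₀), hroot]

end Nondegenerate

section Branches

variable {E : Type*} [NormedAddCommGroup E] [NormedSpace ℝ E] {g : ℝ → E}

lemma decreasingBranch_changeOfVariables (ha : 0 < a) (has : a * (1 + |s|) < 1)
    (hk₀ : k₀ ∈ Icc (-(π / 2)) (π / 2)) (hroot : critPoly a s (sin k₀) = 0)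
    (hg : IntervalIntegrable (fun k => g (groupVelocity a s k)) volume k₀ (π - k₀)) :
    IntervalIntegrable (fun x => branchDensity a s x • g x) volume
        (-maxVelocity a s) (maxVelocity a s) ∧
      ∫ k in k₀..(π - k₀), g (groupVelocity a s k) =
        ∫ x in (-maxVelocity a s)..maxVelocity a s, branchDensity a s x • g x := by
  have hD := cosSqFreq_pos ha.le has
  have hcrit : ∀ k ∈ uIoo k₀ (π - k₀), 0 < critPoly a s (sin k) := fun k hk => by
    rw [uIoo_of_le (by linarith [hk₀.2])] at hk
    exact critPoly_pos_of_lt ha.le has hroot (neg_one_le_sin k₀)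
      (sin_lt_sin_of_mem_Ioo_pi_sub hk₀.1 hk) (sin_le_one k)
  have hcont : ContinuousOn (groupVelocity a s) (uIcc k₀ (π - k₀)) :=
    (continuous_groupVelocity ha.le has).continuousOn
  have hderiv : ∀ k ∈ uIoo k₀ (π - k₀),
      HasDerivAt (groupVelocity a s) (groupVelocityDeriv a s k) k := fun k _ =>
    hasDerivAt_groupVelocity (hD k)
  have hneg : ∀ k ∈ uIoo k₀ (π - k₀), groupVelocityDeriv a s k ≤ 0 := fun k hk =>
    groupVelocityDeriv_nonpos ha.le (hD k) (hcrit k hk).le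
  have hjac : ∀ k ∈ uIoo k₀ (π - k₀),
      groupVelocityDeriv a s k * branchDensity a s (groupVelocity a s k) = -1 := fun k hk =>
    groupVelocityDeriv_mul_branchDensity ha (hD k) (hcrit k hk)
      (groupVelocity_sq_lt_one ha.le has k)
  rw [← groupVelocity_eq_maxVelocity ha has hk₀ hroot, ← groupVelocity_pi_sub]
  exact ⟨(intervalIntegrable_smul_iff_comp_of_deriv_nonpos hcont hderiv hneg hjac).2 hg,
    integral_comp_eq_integral_smul_of_deriv_nonpos hcont hderiv hneg hjac⟩

lemma increasingBranch_changeOfVariables (ha : 0 < a) (has : a * (1 + |s|) < 1)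
    (hk₀ : k₀ ∈ Icc (-(π / 2)) (π / 2)) (hroot : critPoly a s (sin k₀) = 0)
    (hg : IntervalIntegrable (fun k => g (groupVelocity a s k)) volume (π - k₀) (k₀ + 2 * π)) :
    IntervalIntegrable (fun x => branchDensity a (-s) x • g x) volume
        (-maxVelocity a s) (maxVelocity a s) ∧
      ∫ k in (π - k₀)..(k₀ + 2 * π), g (groupVelocity a s k) =
        ∫ x in (-maxVelocity a s)..maxVelocity a s, branchDensity a (-s) x • g x := by
  have hl : π - k₀ = -k₀ + π := by ring
  have hr : k₀ + 2 * π = π - -k₀ + π := by ring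
  have hroot' : critPoly a (-s) (sin (-k₀)) = 0 := by
    rw [sin_neg, critPoly_neg_neg, hroot, neg_zero]
  rw [hl, hr, ← IntervalIntegrable.comp_add_right_iff] at hg
  rw [hl, hr, ← integral_comp_add_right]
  simp only [groupVelocity_add_pi] at hg ⊢
  obtain ⟨hint, heq⟩ := decreasingBranch_changeOfVariables (g := fun x => g (-x)) ha
    (by rwa [abs_neg]) ⟨neg_le_neg hk₀.2, neg_le.2 hk₀.1⟩ hroot' hg
  have hflip (x : ℝ) : branchDensity a (-s) (-x) • g (-x) = branchDensity a (-s) x • g (-x) := by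
    rw [branchDensity_neg_right]
  simp only [maxVelocity_neg, ← hflip] at hint heq
  refine ⟨?_, heq.trans ?_⟩
  · rw [IntervalIntegrable.iff_comp_neg, neg_neg]
    exact hint.symm
  · rw [integral_comp_neg (fun x => branchDensity a (-s) x • g x), neg_neg]

theorem integral_comp_groupVelocity (ha : 0 < a) (has : a * (1 + |s|) < 1)
    (hg : IntervalIntegrable (fun k => g (groupVelocity a s k)) volume (-π) π) :
    ∫ k in (-π)..π, g (groupVelocity a s k) =
      ∫ x in (-maxVelocity a s)..maxVelocity a s,
        (branchDensity a s x + branchDensity a (-s) x) • g x := by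
  obtain ⟨k₀, hk₀, hroot⟩ := exists_critPoly_sin_eq_zero ha.le has
  have hk₀' := Ioo_subset_Icc_self hk₀
  have hper : Function.Periodic (fun k => g (groupVelocity a s k)) (2 * π) :=
    periodic_groupVelocity.comp g
  have hπ : π = -π + 2 * π := by ring
  have hg' : ∀ p q, IntervalIntegrable (fun k => g (groupVelocity a s k)) volume p q :=
    hper.intervalIntegrable two_pi_pos.ne' (t := -π) (by rwa [← hπ])
  obtain ⟨hint₁, heq₁⟩ := decreasingBranch_changeOfVariables ha has hk₀' hroot (hg' _ _)
  obtain ⟨hint₂, heq₂⟩ := increasingBranch_changeOfVariables ha has hk₀' hroot (hg' _ _)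
  calc ∫ k in (-π)..π, g (groupVelocity a s k)
      = ∫ k in k₀..(k₀ + 2 * π), g (groupVelocity a s k) := by
        rw [← hper.intervalIntegral_add_eq (-π) k₀, ← hπ]
    _ = (∫ k in k₀..(π - k₀), g (groupVelocity a s k)) +
          ∫ k in (π - k₀)..(k₀ + 2 * π), g (groupVelocity a s k) :=
        (integral_add_adjacent_intervals (hg' _ _) (hg' _ _)).symm
    _ = _ := by simp only [heq₁, heq₂, add_smul, intervalIntegral.integral_add hint₁ hint₂]

end Branches

section Parameters

variable {ρ ν : ℝ}

lemma rz_sq (hρ : ρ ∈ Ioo (0 : ℝ) 1) : rz ρ ^ 2 = 1 - ρ ^ 2 :=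
  sq_sqrt (by nlinarith [hρ.1, hρ.2])

lemma mul_rz_pos (hρ : ρ ∈ Ioo (0 : ℝ) 1) : 0 < ρ * rz ρ :=
  mul_pos hρ.1 (sqrt_pos.2 (by nlinarith [hρ.1, hρ.2]))

lemma mul_rz_mul_one_add_abs_sin_lt_one (hρ : ρ ∈ Ioo (0 : ℝ) 1)
    (hexc : ∀ n : ℤ, ¬(ρ = 1 / √2 ∧ ν = π / 2 + n * π)) :
    ρ * rz ρ * (1 + |sin ν|) < 1 := by
  have hz2 := rz_sq hρ
  have ha := mul_rz_pos hρ
  have hs := abs_sin_le_one ν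
  have ha2 : ρ * rz ρ ≤ 1 / 2 := by nlinarith [sq_nonneg (ρ - rz ρ)]
  by_contra! hge
  have ha_eq : ρ * rz ρ = 1 / 2 := by nlinarith
  have hs_eq : |sin ν| = 1 := by rw [ha_eq] at hge; linarith
  have hcos : cos ν = 0 := by
    rw [← sq_eq_zero_iff, cos_sq', ← sq_abs, hs_eq]
    norm_num
  obtain ⟨n, hn⟩ := cos_eq_zero_iff.1 hcos
  have hρ_eq : ρ = rz ρ := by
    rw [← sub_eq_zero, ← sq_eq_zero_iff]
    linear_combination hz2 - 2 * ha_eq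
  have hρ2 : ρ ^ 2 = 1 / 2 := by
    rw [← hρ_eq] at hz2
    linarith
  refine hexc n ⟨?_, by rw [hn]; ring⟩
  rw [← sqrt_sq hρ.1.le, hρ2, sqrt_div zero_le_one, sqrt_one]

lemma hfun_eq_groupVelocity (k : ℝ) : hfun ρ ν k = groupVelocity (ρ * rz ρ) (sin ν) k := by
  rw [hfun, groupVelocity, cosSqFreq, mul_pow]

lemma continuous_hfun (hρ : ρ ∈ Ioo (0 : ℝ) 1)
    (hexc : ∀ n : ℤ, ¬(ρ = 1 / √2 ∧ ν = π / 2 + n * π)) : Continuous (hfun ρ ν) := by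
  rw [funext hfun_eq_groupVelocity]
  exact continuous_groupVelocity (mul_rz_pos hρ).le (mul_rz_mul_one_add_abs_sin_lt_one hρ hexc)

lemma hstar_eq_maxVelocity : hstar ρ ν = maxVelocity (ρ * rz ρ) (sin ν) := by
  rw [hstar, maxVelocity, mul_pow]

lemma xif_eq_velXi (hρ : ρ ∈ Ioo (0 : ℝ) 1) (x : ℝ) :
    xif ρ ν x = velXi (ρ * rz ρ) (sin ν) x := by
  rw [xif, velXi, cos_sq']
  linear_combination (-x ^ 2) * rz_sq hρ

lemma etaP_eq_velEta (hρ : ρ ∈ Ioo (0 : ℝ) 1) (x : ℝ) :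
    etaP ρ ν x = velEta (ρ * rz ρ) (sin ν) x := by
  rw [etaP, velEta, xif_eq_velXi hρ, cos_sq']
  ring

lemma etaM_eq_velEta (hρ : ρ ∈ Ioo (0 : ℝ) 1) (x : ℝ) :
    etaM ρ ν x = velEta (ρ * rz ρ) (-sin ν) x := by
  rw [etaM, velEta, velXi_neg, xif_eq_velXi hρ, cos_sq']
  ring

end Parameters

theorem stmt13_general {E : Type*} [NormedAddCommGroup E] [NormedSpace ℝ E] {ρ ν : ℝ}
    (hρ : ρ ∈ Ioo (0 : ℝ) 1) (hexc : ∀ n : ℤ, ¬(ρ = 1 / √2 ∧ ν = π / 2 + n * π)) {g : ℝ → E}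
    (hg : IntervalIntegrable (fun k => g (hfun ρ ν k)) volume (-π) π) :
    ∫ k in (-π)..π, g (hfun ρ ν k) =
      ∫ x in (-hstar ρ ν)..hstar ρ ν,
        ((√(etaP ρ ν x) + √(etaM ρ ν x)) / ((1 - x ^ 2) * √(xif ρ ν x))) • g x := by
  simp only [hfun_eq_groupVelocity] at hg ⊢
  rw [integral_comp_groupVelocity (mul_rz_pos hρ) (mul_rz_mul_one_add_abs_sin_lt_one hρ hexc) hg,
    hstar_eq_maxVelocity]
  simp only [etaP_eq_velEta hρ, etaM_eq_velEta hρ, xif_eq_velXi hρ, branchDensity, add_div,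
    velXi_neg]

/-- change of variable identity for the moment integrals. -/
theorem stmt13 (ρ ν : ℝ) (hρ : ρ ∈ Set.Ioo (0 : ℝ) 1)
    (hexc : ∀ n : ℤ, ¬(ρ = 1 / Real.sqrt 2 ∧ ν = π / 2 + n * π))
    (r : ℕ) (c : ℝ) :
    ∫ k in (-π)..π, (hfun ρ ν k) ^ r * (1 + c * hfun ρ ν k) / (2 * π)
      = ∫ x in (-(hstar ρ ν))..(hstar ρ ν),
          x ^ r * (1 + c * x) * (Real.sqrt (etaP ρ ν x) + Real.sqrt (etaM ρ ν x))
            / (2 * π * (1 - x ^ 2) * Real.sqrt (xif ρ ν x)) := by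
  have hcont := continuous_hfun hρ hexc
  refine (stmt13_general hρ hexc (g := fun x => x ^ r * (1 + c * x) / (2 * π))
    (Continuous.intervalIntegrable (by fun_prop) _ _)).trans (integral_congr fun x _ => ?_)
  simp only [smul_eq_mul, div_eq_mul_inv, mul_inv]
  ring

end
end
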